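/- arXiv:2411.16040 — 11 statements merged into one kernel-verified Lean document; each statement's English description precedes it below -/
import Mathlib

section
/- Let (H, G, t, Φ) be a crossed module of groups. Define on H × H the multiplication (p, q)·(r, s) = (p·r, q·p·s·p⁻¹) and on G × G the multiplication (a, b)·(c, d) = (a·c, b·a·d·a⁻¹), and define Φ̃((a, b))(p, q) = (Φ(a)(p), Φ(b·a)(q·p)·(Φ(a)(p))⁻¹). Then (H⋉H, G⋉G, (t, t), Φ̃) is a crossed module of groups; that is: H × H and G × G with these multiplications are groups, each Φ̃((a, b)) is an automorphism of H⋉H, the map (a, b) ↦ Φ̃((a, b)) is a group homomorphism from G⋉G to Aut(H⋉H), the map (t, t)(p, q) = (t(p), t(q)) is a group homomorphism from H⋉H to G⋉G, and for all (a, b) ∈ G⋉G and (p, q), (r, s) ∈ H⋉H one has Φ̃((t, t)(p, q))(r, s) = (p, q)·(r, s)·(p, q)⁻¹ and (t, t)(Φ̃((a, b))(p, q)) = (a, b)·(t, t)(p, q)·(a, b)⁻¹. -/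
/-- A crossed module of groups: `t : H → G` a group homomorphism, `Φ` an action of `G` on `H`
by automorphisms (a group homomorphism `G → Aut(H)`), satisfying the Peiffer identity and
equivariance. -/
structure IsCrossedModule {H G : Type*} [Group H] [Group G]
    (t : H → G) (Φ : G → H → H) : Prop where
  t_mul : ∀ p q : H, t (p * q) = t p * t q
  Φ_mul_hom : ∀ (a : G) (p q : H), Φ a (p * q) = Φ a p * Φ a q
  Φ_bij : ∀ a : G, Function.Bijective (Φ a)
  Φ_one : ∀ p : H, Φ 1 p = p
  Φ_mul : ∀ (a b : G) (p : H), Φ (a * b) p = Φ a (Φ b p)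
  peiffer : ∀ p q : H, Φ (t p) q = p * q * p⁻¹
  equivar : ∀ (a : G) (p : H), t (Φ a p) = a * t p * a⁻¹

/-- The semidirect-product style multiplication `(p,q)·(r,s) = (p·r, q·p·s·p⁻¹)` on `X × X`. -/
def sdMul {X : Type*} [Group X] (z w : X × X) : X × X :=
  (z.1 * w.1, z.2 * z.1 * w.2 * z.1⁻¹)

/-- The inverse for `sdMul`. -/
def sdInv {X : Type*} [Group X] (z : X × X) : X × X :=
  (z.1⁻¹, z.1⁻¹ * z.2⁻¹ * z.1)

/-- The action `Φ̃((a,b))(p,q) = (Φ(a)p, Φ(b·a)(q·p)·(Φ(a)p)⁻¹)`. -/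
def PhiT {H G : Type*} [Group H] [Group G] (Φ : G → H → H)
    (a : G × G) (z : H × H) : H × H :=
  (Φ a.1 z.1, Φ (a.2 * a.1) (z.2 * z.1) * (Φ a.1 z.1)⁻¹)

section SemidirectProduct

variable {X : Type*} [Group X]

theorem sdMul_assoc (x y z : X × X) : sdMul (sdMul x y) z = sdMul x (sdMul y z) := by
  simp [sdMul, mul_assoc]

theorem one_sdMul (x : X × X) : sdMul (1, 1) x = x := by
  simp [sdMul]

theorem sdMul_one (x : X × X) : sdMul x (1, 1) = x := by
  simp [sdMul]

theorem sdInv_sdMul (x : X × X) : sdMul (sdInv x) x = (1, 1) := by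
  simp [sdMul, sdInv, mul_assoc]

theorem sdMul_sdInv (x : X × X) : sdMul x (sdInv x) = (1, 1) := by
  simp [sdMul, sdInv, mul_assoc]

end SemidirectProduct

namespace IsCrossedModule

variable {H G : Type*} [Group H] [Group G] {t : H → G} {Φ : G → H → H}

theorem t_inv (h : IsCrossedModule t Φ) (p : H) : t p⁻¹ = (t p)⁻¹ :=
  map_inv (MonoidHom.mk' t h.t_mul) p

theorem PhiT_one (h : IsCrossedModule t Φ) (z : H × H) : PhiT Φ (1, 1) z = z := by
  simp [PhiT, h.Φ_one]

theorem PhiT_sdMul_left (h : IsCrossedModule t Φ) (a b : G × G) (z : H × H) :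
    PhiT Φ (sdMul a b) z = PhiT Φ a (PhiT Φ b z) := by
  simp [PhiT, sdMul, h.Φ_mul, mul_assoc]

theorem PhiT_sdMul_right (h : IsCrossedModule t Φ) (a : G × G) (z w : H × H) :
    PhiT Φ a (sdMul z w) = sdMul (PhiT Φ a z) (PhiT Φ a w) := by
  simp [PhiT, sdMul, h.Φ_mul_hom, mul_assoc]

theorem PhiT_bijective (h : IsCrossedModule t Φ) (a : G × G) :
    Function.Bijective (PhiT Φ a) := by
  refine Function.bijective_iff_has_inverse.mpr ⟨PhiT Φ (sdInv a), fun z => ?_, fun z => ?_⟩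
  · rw [← h.PhiT_sdMul_left, sdInv_sdMul, h.PhiT_one]
  · rw [← h.PhiT_sdMul_left, sdMul_sdInv, h.PhiT_one]

theorem t_sdMul (h : IsCrossedModule t Φ) (z w : H × H) :
    (t (sdMul z w).1, t (sdMul z w).2) = sdMul (t z.1, t z.2) (t w.1, t w.2) := by
  simp [sdMul, h.t_mul, h.t_inv]

theorem PhiT_peiffer (h : IsCrossedModule t Φ) (z w : H × H) :
    PhiT Φ (t z.1, t z.2) w = sdMul (sdMul z w) (sdInv z) := by
  simp [PhiT, sdMul, sdInv, h.Φ_mul, h.peiffer, mul_assoc]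

theorem t_PhiT (h : IsCrossedModule t Φ) (a : G × G) (z : H × H) :
    (t (PhiT Φ a z).1, t (PhiT Φ a z).2) = sdMul (sdMul a (t z.1, t z.2)) (sdInv a) := by
  simp [PhiT, sdMul, sdInv, h.t_mul, h.t_inv, h.equivar, mul_assoc]

end IsCrossedModule

theorem stmt0 {H G : Type*} [Group H] [Group G] (t : H → G) (Φ : G → H → H)
    (hcm : IsCrossedModule t Φ) :
    -- (H ⋉ H, sdMul) is a group
    (∀ x y z : H × H, sdMul (sdMul x y) z = sdMul x (sdMul y z)) ∧
    (∀ x : H × H, sdMul (1, 1) x = x) ∧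
    (∀ x : H × H, sdMul x (1, 1) = x) ∧
    (∀ x : H × H, sdMul (sdInv x) x = (1, 1) ∧ sdMul x (sdInv x) = (1, 1)) ∧
    -- (G ⋉ G, sdMul) is a group
    (∀ x y z : G × G, sdMul (sdMul x y) z = sdMul x (sdMul y z)) ∧
    (∀ x : G × G, sdMul (1, 1) x = x) ∧
    (∀ x : G × G, sdMul x (1, 1) = x) ∧
    (∀ x : G × G, sdMul (sdInv x) x = (1, 1) ∧ sdMul x (sdInv x) = (1, 1)) ∧
    -- each Φ̃((a,b)) is an automorphism of H ⋉ H
    (∀ a : G × G, Function.Bijective (PhiT Φ a)) ∧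
    (∀ (a : G × G) (z w : H × H),
      PhiT Φ a (sdMul z w) = sdMul (PhiT Φ a z) (PhiT Φ a w)) ∧
    -- (a,b) ↦ Φ̃((a,b)) is a group homomorphism from G ⋉ G to Aut(H ⋉ H)
    (∀ (a b : G × G) (z : H × H), PhiT Φ (sdMul a b) z = PhiT Φ a (PhiT Φ b z)) ∧
    -- (t,t) is a group homomorphism from H ⋉ H to G ⋉ G
    (∀ z w : H × H,
      (t (sdMul z w).1, t (sdMul z w).2) = sdMul (t z.1, t z.2) (t w.1, t w.2)) ∧
    -- Peiffer identity
    (∀ z w : H × H, PhiT Φ (t z.1, t z.2) w = sdMul (sdMul z w) (sdInv z)) ∧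
    -- equivariance
    (∀ (a : G × G) (z : H × H),
      (t (PhiT Φ a z).1, t (PhiT Φ a z).2) = sdMul (sdMul a (t z.1, t z.2)) (sdInv a)) := by
  exact ⟨sdMul_assoc, one_sdMul, sdMul_one, fun x => ⟨sdInv_sdMul x, sdMul_sdInv x⟩,
    sdMul_assoc, one_sdMul, sdMul_one, fun x => ⟨sdInv_sdMul x, sdMul_sdInv x⟩,
    hcm.PhiT_bijective, hcm.PhiT_sdMul_right, hcm.PhiT_sdMul_left, hcm.t_sdMul,
    hcm.PhiT_peiffer, hcm.t_PhiT⟩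
end

section
/- Let (H, G, t, Φ) be a crossed module of groups and let 𝓑₁ : H → H and 𝓑₀ : G → G be maps. Then (𝓑₁, 𝓑₀) is a Rota-Baxter operator on (H, G, t, Φ) if and only if the following hold: (1) the graph Gr(𝓑₁) = {(𝓑₁(p), p) : p ∈ H} is a subgroup of H⋉H (the group H × H with multiplication (p, q)·(r, s) = (p·r, q·p·s·p⁻¹)); (2) the graph Gr(𝓑₀) = {(𝓑₀(a), a) : a ∈ G} is a subgroup of G⋉G (defined analogously); (3) (t, t) maps Gr(𝓑₁) into Gr(𝓑₀); (4) for every (𝓑₀(a), a) ∈ Gr(𝓑₀) the automorphism Φ̃((𝓑₀(a), a)), where Φ̃((a, b))(p, q) = (Φ(a)(p), Φ(b·a)(q·p)·(Φ(a)(p))⁻¹), maps Gr(𝓑₁) into Gr(𝓑₁). -/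
/-- Rota-Baxter operator on a group. -/
def IsRotaBaxter {G : Type*} [Group G] (B : G → G) : Prop :=
  ∀ a b : G, B a * B b = B (a * B a * b * (B a)⁻¹)

/-- Rota-Baxter operator on a crossed module of groups. -/
structure IsCMRotaBaxter {H G : Type*} [Group H] [Group G]
    (t : H → G) (Φ : G → H → H) (B₁ : H → H) (B₀ : G → G) : Prop where
  rb₁ : IsRotaBaxter B₁
  rb₀ : IsRotaBaxter B₀
  t_comm : ∀ p : H, t (B₁ p) = B₀ (t p)
  compat : ∀ (a : G) (p : H),
    Φ (B₀ a) (B₁ p) = B₁ (Φ (a * B₀ a) (p * B₁ p) * (Φ (B₀ a) (B₁ p))⁻¹)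

/-- The graph `{(B p, p)}` of a map `B`. -/
def Gr {X : Type*} (B : X → X) : Set (X × X) := {z | z.1 = B z.2}

namespace IsRotaBaxter

variable {X : Type*} [Group X] {B : X → X}

theorem map_one (hB : IsRotaBaxter B) : B 1 = 1 := by
  simpa using hB 1 1

theorem map_inv_conj (hB : IsRotaBaxter B) (a : X) : B ((B a)⁻¹ * a⁻¹ * B a) = (B a)⁻¹ := by
  have h := hB a ((B a)⁻¹ * a⁻¹ * B a)
  have e : a * B a * ((B a)⁻¹ * a⁻¹ * B a) * (B a)⁻¹ = 1 := by group
  rw [e, hB.map_one] at h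
  exact eq_inv_of_mul_eq_one_right h

end IsRotaBaxter

/-- A map is a Rota-Baxter operator if and only if its graph is a subgroup of `X ⋉ X`. -/
theorem isRotaBaxter_iff_graph {X : Type*} [Group X] (B : X → X) :
    IsRotaBaxter B ↔
      ((1, 1) ∈ Gr B) ∧
        (∀ z w : X × X, z ∈ Gr B → w ∈ Gr B → sdMul z w ∈ Gr B) ∧
        (∀ z : X × X, z ∈ Gr B → sdInv z ∈ Gr B) := by
  constructor
  · intro hB
    refine ⟨hB.map_one.symm, ?_, ?_⟩
    · rintro ⟨x, a⟩ ⟨y, b⟩ (rfl : x = B a) (rfl : y = B b)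
      exact hB a b
    · rintro ⟨x, a⟩ (rfl : x = B a)
      exact (hB.map_inv_conj a).symm
  · rintro ⟨-, hmul, -⟩ a b
    exact hmul (B a, a) (B b, b) rfl rfl

theorem stmt1 {H G : Type*} [Group H] [Group G] (t : H → G) (Φ : G → H → H)
    (hcm : IsCrossedModule t Φ) (B₁ : H → H) (B₀ : G → G) :
    IsCMRotaBaxter t Φ B₁ B₀ ↔
      -- (1) Gr(B₁) is a subgroup of H ⋉ H
      (((1, 1) ∈ Gr B₁) ∧
        (∀ z w : H × H, z ∈ Gr B₁ → w ∈ Gr B₁ → sdMul z w ∈ Gr B₁) ∧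
        (∀ z : H × H, z ∈ Gr B₁ → sdInv z ∈ Gr B₁)) ∧
      -- (2) Gr(B₀) is a subgroup of G ⋉ G
      (((1, 1) ∈ Gr B₀) ∧
        (∀ z w : G × G, z ∈ Gr B₀ → w ∈ Gr B₀ → sdMul z w ∈ Gr B₀) ∧
        (∀ z : G × G, z ∈ Gr B₀ → sdInv z ∈ Gr B₀)) ∧
      -- (3) (t,t) maps Gr(B₁) into Gr(B₀)
      (∀ z : H × H, z ∈ Gr B₁ → (t z.1, t z.2) ∈ Gr B₀) ∧
      -- (4) Φ̃((B₀ a, a)) maps Gr(B₁) into Gr(B₁)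
      (∀ (a : G) (z : H × H), z ∈ Gr B₁ → PhiT Φ (B₀ a, a) z ∈ Gr B₁) := by
  rw [← isRotaBaxter_iff_graph, ← isRotaBaxter_iff_graph]
  constructor
  · rintro ⟨rb₁, rb₀, t_comm, compat⟩
    refine ⟨rb₁, rb₀, ?_, ?_⟩
    · rintro ⟨q, p⟩ (rfl : q = B₁ p)
      exact t_comm p
    · rintro a ⟨q, p⟩ (rfl : q = B₁ p)
      exact compat a p
  · rintro ⟨rb₁, rb₀, ht, hΦ⟩
    exact ⟨rb₁, rb₀, fun p => ht (B₁ p, p) rfl, fun a p => hΦ a (B₁ p, p) rfl⟩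
end

section
/- Let (𝓑₁, 𝓑₀) be a Rota-Baxter operator on a crossed module of groups (H, G, t, Φ). Define p ·_{𝓑₁} q = p·𝓑₁(p)·q·𝓑₁(p)⁻¹ on H and Φ̂(a)(p) = Φ(a·𝓑₀(a))(p·𝓑₁(p)) · (Φ(𝓑₀(a))(𝓑₁(p)))⁻¹ for a ∈ G, p ∈ H. Then for all a ∈ G and p, q ∈ H, Φ̂(a)(p ·_{𝓑₁} q) = Φ̂(a)(p) ·_{𝓑₁} Φ̂(a)(q). -/
/-- The descended multiplication `p ·_B q = p · B(p) · q · B(p)⁻¹`. -/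
def mulB {X : Type*} [Group X] (B : X → X) (p q : X) : X := p * B p * q * (B p)⁻¹

/-- The descended action `Φ̂(a)(p) = Φ(a·B₀(a))(p·B₁(p)) · (Φ(B₀(a))(B₁(p)))⁻¹`. -/
def hatPhi {H G : Type*} [Group H] [Group G] (Φ : G → H → H)
    (B₁ : H → H) (B₀ : G → G) (a : G) (p : H) : H :=
  Φ (a * B₀ a) (p * B₁ p) * (Φ (B₀ a) (B₁ p))⁻¹

theorem stmt2 {H G : Type*} [Group H] [Group G] (t : H → G) (Φ : G → H → H)
    (B₁ : H → H) (B₀ : G → G) (hcm : IsCrossedModule t Φ)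
    (hrb : IsCMRotaBaxter t Φ B₁ B₀) :
    ∀ (a : G) (p q : H),
      hatPhi Φ B₁ B₀ a (mulB B₁ p q)
        = mulB B₁ (hatPhi Φ B₁ B₀ a p) (hatPhi Φ B₁ B₀ a q) := by
  intro a p q
  have hB : B₁ (mulB B₁ p q) = B₁ p * B₁ q := (hrb.rb₁ p q).symm
  have hmul : mulB B₁ p q * (B₁ p * B₁ q) = p * B₁ p * (q * B₁ q) := by
    simp only [mulB]; group
  have hhat : ∀ x, B₁ (hatPhi Φ B₁ B₀ a x) = Φ (B₀ a) (B₁ x) :=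
    fun x => (hrb.compat a x).symm
  rw [hatPhi, hB, hmul, hcm.Φ_mul_hom, hcm.Φ_mul_hom (B₀ a), mulB, hhat]
  simp only [hatPhi, inv_mul_cancel_left, mul_inv_rev, mul_assoc]
end

section
/- Let (𝓑₁, 𝓑₀) be a Rota-Baxter operator on a crossed module of groups (H, G, t, Φ). Define a ·_{𝓑₀} b = a·𝓑₀(a)·b·𝓑₀(a)⁻¹ on G and Φ̂(a)(p) = Φ(a·𝓑₀(a))(p·𝓑₁(p)) · (Φ(𝓑₀(a))(𝓑₁(p)))⁻¹ for a ∈ G, p ∈ H. Then for all a, b ∈ G and p ∈ H, Φ̂(a ·_{𝓑₀} b)(p) = Φ̂(a)(Φ̂(b)(p)). -/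
theorem stmt3 {H G : Type*} [Group H] [Group G] (t : H → G) (Φ : G → H → H)
    (B₁ : H → H) (B₀ : G → G) (hcm : IsCrossedModule t Φ)
    (hrb : IsCMRotaBaxter t Φ B₁ B₀) :
    ∀ (a b : G) (p : H),
      hatPhi Φ B₁ B₀ (mulB B₀ a b) p
        = hatPhi Φ B₁ B₀ a (hatPhi Φ B₁ B₀ b p) := by
  intro a b p
  have hB₁ : B₁ (hatPhi Φ B₁ B₀ b p) = Φ (B₀ b) (B₁ p) := (hrb.compat b p).symm
  have hmul : hatPhi Φ B₁ B₀ b p * B₁ (hatPhi Φ B₁ B₀ b p) = Φ (b * B₀ b) (p * B₁ p) := by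
    rw [hB₁, hatPhi, inv_mul_cancel_right]
  have hB₀ : B₀ (mulB B₀ a b) = B₀ a * B₀ b := (hrb.rb₀ a b).symm
  have hprod : mulB B₀ a b * B₀ (mulB B₀ a b) = a * B₀ a * (b * B₀ b) := by
    rw [hB₀, mulB]
    group
  rw [hatPhi.eq_1 Φ B₁ B₀ a, hmul, hB₁, hatPhi, hprod, hB₀, hcm.Φ_mul (a * B₀ a),
    hcm.Φ_mul (B₀ a)]
end

section
/- Let (𝓑₁, 𝓑₀) be a Rota-Baxter operator on a crossed module of groups (H, G, t, Φ). Define p ·_{𝓑₁} q = p·𝓑₁(p)·q·𝓑₁(p)⁻¹ on H, a ·_{𝓑₀} b = a·𝓑₀(a)·b·𝓑₀(a)⁻¹ on G, and Φ̂(a)(p) = Φ(a·𝓑₀(a))(p·𝓑₁(p)) · (Φ(𝓑₀(a))(𝓑₁(p)))⁻¹. Then for all a ∈ G and p, q ∈ H: (1) t(p ·_{𝓑₁} q) = t(p) ·_{𝓑₀} t(q); (2) t(Φ̂(a)(p)) = a ·_{𝓑₀} t(p) ·_{𝓑₀} a†, where a† = 𝓑₀(a)⁻¹·a⁻¹·𝓑₀(a);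 (3) Φ̂(t(p))(q) = p ·_{𝓑₁} q ·_{𝓑₁} p†, where p† = 𝓑₁(p)⁻¹·p⁻¹·𝓑₁(p). -/
theorem mulB_mulB_conj {X : Type*} [Group X] {B : X → X} (hB : IsRotaBaxter B) (a b : X) :
    mulB B (mulB B a b) ((B a)⁻¹ * a⁻¹ * B a)
      = (a * B a) * (b * B b) * (a * B a)⁻¹ * (B a * B b * (B a)⁻¹)⁻¹ := by
  simp only [mulB, ← hB a b]
  group

theorem stmt4 {H G : Type*} [Group H] [Group G] (t : H → G) (Φ : G → H → H)
    (B₁ : H → H) (B₀ : G → G) (hcm : IsCrossedModule t Φ)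
    (hrb : IsCMRotaBaxter t Φ B₁ B₀) :
    -- (1) t is a homomorphism for the descended multiplications
    (∀ p q : H, t (mulB B₁ p q) = mulB B₀ (t p) (t q)) ∧
    -- (2) t(Φ̂(a)(p)) = a ·_B₀ t(p) ·_B₀ a†, with a† = B₀(a)⁻¹·a⁻¹·B₀(a)
    (∀ (a : G) (p : H),
      t (hatPhi Φ B₁ B₀ a p)
        = mulB B₀ (mulB B₀ a (t p)) ((B₀ a)⁻¹ * a⁻¹ * B₀ a)) ∧
    -- (3) Φ̂(t(p))(q) = p ·_B₁ q ·_B₁ p†, with p† = B₁(p)⁻¹·p⁻¹·B₁(p)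
    (∀ p q : H,
      hatPhi Φ B₁ B₀ (t p) q
        = mulB B₁ (mulB B₁ p q) ((B₁ p)⁻¹ * p⁻¹ * B₁ p)) := by
  let f : H →* G := MonoidHom.mk' t hcm.t_mul
  have t_inv (p : H) : t p⁻¹ = (t p)⁻¹ := map_inv f p
  refine ⟨fun p q => ?_, fun a p => ?_, fun p q => ?_⟩
  · simp only [mulB, hcm.t_mul, t_inv, hrb.t_comm]
  · rw [mulB_mulB_conj hrb.rb₀]
    simp only [hatPhi, hcm.t_mul, t_inv, hcm.equivar, hrb.t_comm]
  · rw [mulB_mulB_conj hrb.rb₁]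
    simp only [hatPhi, ← hrb.t_comm, ← hcm.t_mul, hcm.peiffer]
end

section
/- Let (𝓑₁, 𝓑₀) be a Rota-Baxter operator on a crossed module of groups (H, G, t, Φ). On G × H define the semidirect product multiplication (a, p) ·_Φ (b, q) = (a·b, p·Φ(a)(q)), and define 𝓑(a, p) = (𝓑₀(a), 𝓓(a, p)) where 𝓓(a, p) = Φ(𝓑₀(a))(𝓑₁(Φ(𝓑₀(a)⁻¹·a⁻¹)(p))). Then 𝓑 is a Rota-Baxter operator on the group (G ⋉_Φ H, ·_Φ); that is, 𝓑(a, p) ·_Φ 𝓑(b, q) = 𝓑((a, p) ·_Φ 𝓑(a, p) ·_Φ (b, q) ·_Φ 𝓑(a, p)⁻¹) for all (a, p), (b, q) ∈ G × H. -/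
/-- The semidirect product multiplication `(a,p)·_Φ(b,q) = (a·b, p·Φ(a)q)` on `G × H`. -/
def sdpMul {H G : Type*} [Group H] [Group G] (Φ : G → H → H) (m n : G × H) : G × H :=
  (m.1 * n.1, m.2 * Φ m.1 n.2)

/-- The inverse for `sdpMul`. -/
def sdpInv {H G : Type*} [Group H] [Group G] (Φ : G → H → H) (m : G × H) : G × H :=
  (m.1⁻¹, Φ m.1⁻¹ m.2⁻¹)

/-- The operator `𝓑(a,p) = (B₀(a), Φ(B₀(a))(B₁(Φ(B₀(a)⁻¹·a⁻¹)(p))))` on `G ⋉_Φ H`. -/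
def Bcal {H G : Type*} [Group H] [Group G] (Φ : G → H → H)
    (B₁ : H → H) (B₀ : G → G) (m : G × H) : G × H :=
  (B₀ m.1, Φ (B₀ m.1) (B₁ (Φ ((B₀ m.1)⁻¹ * m.1⁻¹) m.2)))

theorem IsRotaBaxter.map_one_s5 {G : Type*} [Group G] {B : G → G} (hB : IsRotaBaxter B) :
    B 1 = 1 := by
  simpa using hB 1 1

theorem IsRotaBaxter.map_conj_inv {G : Type*} [Group G] {B : G → G} (hB : IsRotaBaxter B)
    (b : G) : B ((B b)⁻¹ * b⁻¹ * B b) = (B b)⁻¹ := by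
  refine eq_inv_of_mul_eq_one_right ?_
  rw [hB, ← hB.map_one_s5]
  congr 1
  group

theorem IsCrossedModule.map_inv {H G : Type*} [Group H] [Group G] {t : H → G} {Φ : G → H → H}
    (hcm : IsCrossedModule t Φ) (a : G) (p : H) : Φ a p⁻¹ = (Φ a p)⁻¹ :=
  _root_.map_inv (MonoidHom.mk' (Φ a) (hcm.Φ_mul_hom a)) p

/-- Compatibility at an element whose image is `(B₀ b)⁻¹`, combined with the Rota-Baxter
identity for `B₁`. -/
theorem IsCMRotaBaxter.action_inv_mul {H G : Type*} [Group H] [Group G] {t : H → G}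
    {Φ : G → H → H} {B₁ : H → H} {B₀ : G → G} (hrb : IsCMRotaBaxter t Φ B₁ B₀)
    (b : G) (p q : H) :
    Φ (B₀ b)⁻¹ (B₁ p) * B₁ q
      = B₁ (Φ ((B₀ b)⁻¹ * b⁻¹) (p * B₁ p) * q * (Φ (B₀ b)⁻¹ (B₁ p))⁻¹) := by
  have h := hrb.compat ((B₀ b)⁻¹ * b⁻¹ * B₀ b) p
  rw [hrb.rb₀.map_conj_inv, mul_inv_cancel_right] at h
  have h' := hrb.rb₁ (Φ ((B₀ b)⁻¹ * b⁻¹) (p * B₁ p) * (Φ (B₀ b)⁻¹ (B₁ p))⁻¹) q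
  rwa [← h, inv_mul_cancel_right] at h'

theorem stmt5 {H G : Type*} [Group H] [Group G] (t : H → G) (Φ : G → H → H)
    (B₁ : H → H) (B₀ : G → G) (hcm : IsCrossedModule t Φ)
    (hrb : IsCMRotaBaxter t Φ B₁ B₀) :
    ∀ m n : G × H,
      sdpMul Φ (Bcal Φ B₁ B₀ m) (Bcal Φ B₁ B₀ n)
        = Bcal Φ B₁ B₀
            (sdpMul Φ (sdpMul Φ (sdpMul Φ m (Bcal Φ B₁ B₀ m)) n)
              (sdpInv Φ (Bcal Φ B₁ B₀ m))) := by
  rintro ⟨a, p⟩ ⟨b, q⟩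
  obtain ⟨p, rfl⟩ := (hcm.Φ_bij (a * B₀ a)).2 p
  obtain ⟨q, rfl⟩ := (hcm.Φ_bij (b * B₀ b)).2 q
  have cancel (g k : G) (r : H) : Φ (g⁻¹ * k⁻¹) (Φ (k * g) r) = r := by
    rw [← hcm.Φ_mul, ← mul_inv_rev, inv_mul_cancel, hcm.Φ_one]
  simp only [sdpMul, sdpInv, Bcal, cancel, ← hrb.rb₀ a b, Prod.mk.injEq, true_and]
  have arg : Φ ((B₀ a * B₀ b)⁻¹ * (a * B₀ a * b * (B₀ a)⁻¹)⁻¹)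
      (Φ (a * B₀ a) p * Φ a (Φ (B₀ a) (B₁ p)) * Φ (a * B₀ a) (Φ (b * B₀ b) q)
        * Φ (a * B₀ a * b) (Φ (B₀ a)⁻¹ (Φ (B₀ a) (B₁ p))⁻¹))
      = Φ ((B₀ b)⁻¹ * b⁻¹) (p * B₁ p) * q * (Φ (B₀ b)⁻¹ (B₁ p))⁻¹ := by
    simp only [← hcm.map_inv, hcm.Φ_mul_hom, ← hcm.Φ_mul]
    have hp : (B₀ a * B₀ b)⁻¹ * (a * B₀ a * b * (B₀ a)⁻¹)⁻¹ * (a * B₀ a)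
        = (B₀ b)⁻¹ * b⁻¹ := by
      group
    simp only [← mul_assoc] at hp ⊢
    simp [hp, hcm.Φ_one, -mul_inv_rev]
  rw [arg, ← hrb.action_inv_mul, hcm.Φ_mul_hom, ← hcm.Φ_mul, ← hcm.Φ_mul,
    mul_inv_cancel_right]
end

section
/- Let 𝓑 be a Rota-Baxter operator on a group G. Define R : G × G → G × G by R(a, b) = (Ad_{𝓑(a)}(b), Ad_{(𝓑(c)⁻¹)·c⁻¹}(a)) where c = Ad_{𝓑(a)}(b) and Ad_g(x) = g·x·g⁻¹. Then R is a bijection and satisfies the braid relation (R × Id)(Id × R)(R × Id) = (Id × R)(R × Id)(Id × R) as maps G × G × G → G × G × G; i.e., (G, R) is a set-theoretical solution of the Yang-Baxter equation. -/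
/-- The map `R(a,b) = (Ad_{B(a)}(b), Ad_{B(c)⁻¹·c⁻¹}(a))` with `c = Ad_{B(a)}(b)`,
where `Ad_g(x) = g·x·g⁻¹`. -/
def Rrb {G : Type*} [Group G] (B : G → G) (z : G × G) : G × G :=
  let c := B z.1 * z.2 * (B z.1)⁻¹
  let d := (B c)⁻¹ * c⁻¹
  (c, d * z.1 * d⁻¹)

/-- `R × Id` on triples. -/
def R12 {X : Type*} (R : X × X → X × X) (w : X × X × X) : X × X × X :=
  ((R (w.1, w.2.1)).1, (R (w.1, w.2.1)).2, w.2.2)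

/-- `Id × R` on triples. -/
def R23 {X : Type*} (R : X × X → X × X) (w : X × X × X) : X × X × X :=
  (w.1, R w.2)

/-- `B` takes the same product on a pair and on its image under `Rrb B`. -/
theorem IsRotaBaxter.mul_Rrb {G : Type*} [Group G] {B : G → G} (hrb : IsRotaBaxter B)
    (a b : G) : B (Rrb B (a, b)).1 * B (Rrb B (a, b)).2 = B a * B b := by
  rw [hrb, hrb a b]
  congr 1
  simp only [Rrb]
  group

theorem Rrb_bijective {G : Type*} [Group G] (B : G → G) : Function.Bijective (Rrb B) := by
  let inv : G × G → G × G := fun w =>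
    let a := w.1 * B w.1 * w.2 * (B w.1)⁻¹ * w.1⁻¹
    (a, (B a)⁻¹ * w.1 * B a)
  refine Function.bijective_iff_has_inverse.2 ⟨inv, ?_, ?_⟩
  · rintro ⟨a, b⟩
    have ha : (inv (Rrb B (a, b))).1 = a := by
      simp only [inv, Rrb]
      group
    refine Prod.ext ha ?_
    change (B (inv (Rrb B (a, b))).1)⁻¹ * _ * B (inv (Rrb B (a, b))).1 = b
    rw [ha]
    simp only [Rrb]
    group
  · rintro ⟨c, d⟩
    have hc : (Rrb B (inv (c, d))).1 = c := by
      simp only [inv, Rrb]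
      group
    refine Prod.ext hc ?_
    change ((B (Rrb B (inv (c, d))).1)⁻¹ * (Rrb B (inv (c, d))).1⁻¹) * _ *
      ((B (Rrb B (inv (c, d))).1)⁻¹ * (Rrb B (inv (c, d))).1⁻¹)⁻¹ = d
    rw [hc]
    simp only [inv]
    group

theorem IsRotaBaxter.braid {G : Type*} [Group G] {B : G → G} (hrb : IsRotaBaxter B)
    (w : G × G × G) :
    R12 (Rrb B) (R23 (Rrb B) (R12 (Rrb B) w))
      = R23 (Rrb B) (R12 (Rrb B) (R23 (Rrb B) w)) := by
  obtain ⟨a, b, z⟩ := w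
  have fst_eq (s t : G) : (Rrb B (s, t)).1 = B s * t * (B s)⁻¹ := rfl
  have snd_eq (s t : G) : (Rrb B (s, t)).2 =
      ((B (Rrb B (s, t)).1)⁻¹ * (Rrb B (s, t)).1⁻¹) * s *
        ((B (Rrb B (s, t)).1)⁻¹ * (Rrb B (s, t)).1⁻¹)⁻¹ := rfl
  simp only [R12, R23]
  have hab := hrb.mul_Rrb a b
  have hc := fst_eq a b
  have ha' := snd_eq a b
  generalize Rrb B (a, b) = ca at *
  obtain ⟨c, a'⟩ := ca
  have hu := fst_eq a' z
  have ha'' := snd_eq a' z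
  generalize Rrb B (a', z) = ua at *
  obtain ⟨u, a''⟩ := ua
  have hy := fst_eq b z
  have hb' := snd_eq b z
  generalize Rrb B (b, z) = yb at *
  obtain ⟨y, b'⟩ := yb
  have hay := hrb.mul_Rrb a y
  have hx := fst_eq a y
  have hp := snd_eq a y
  generalize Rrb B (a, y) = xp at *
  obtain ⟨x, p⟩ := xp
  have hcu := hrb.mul_Rrb c u
  have hx' := fst_eq c u
  have hq := snd_eq c u
  generalize Rrb B (c, u) = xq at *
  obtain ⟨x', q⟩ := xq
  have hq' := fst_eq p b'
  have hr := snd_eq p b'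
  generalize Rrb B (p, b') = qr at *
  obtain ⟨q', r⟩ := qr
  dsimp only at *
  have hx_eq : x' = x := by
    have hA' : B a' = (B c)⁻¹ * (B a * B b) := by rw [← hab]; group
    rw [hx', hx, hu, hy, hA']
    group
  rw [hx_eq] at hq hcu hx'
  have hq_eq : q' = q := by
    have hP : B p = (B x)⁻¹ * (B a * B y) := by rw [← hay]; group
    rw [hq', hq, hb', hP, hc, hx]
    group
  rw [hq_eq] at hr
  have hr_eq : a'' = r := by
    have hQ : B q = (B x)⁻¹ * (B c * B u) := by rw [← hcu]; group
    have hl : a'' = ((B u)⁻¹ * (B c)⁻¹ * x⁻¹ * c⁻¹) * a *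
        ((B u)⁻¹ * (B c)⁻¹ * x⁻¹ * c⁻¹)⁻¹ := by
      rw [ha'', ha']
      have hux : u⁻¹ * (B c)⁻¹ = (B c)⁻¹ * x⁻¹ := by rw [hx']; group
      have hd : (B u)⁻¹ * u⁻¹ * ((B c)⁻¹ * c⁻¹) = (B u)⁻¹ * (B c)⁻¹ * x⁻¹ * c⁻¹ := by
        rw [mul_assoc, ← mul_assoc u⁻¹, hux]; group
      rw [← hd]
      group
    rw [hl, hr, hQ, hp, hq]
    group
  rw [hx_eq, hq_eq, hr_eq]

theorem stmt7 {G : Type*} [Group G] (B : G → G) (hrb : IsRotaBaxter B) :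
    Function.Bijective (Rrb B) ∧
    ∀ w : G × G × G,
      R12 (Rrb B) (R23 (Rrb B) (R12 (Rrb B) w))
        = R23 (Rrb B) (R12 (Rrb B) (R23 (Rrb B) w)) := by
  exact ⟨Rrb_bijective B, hrb.braid⟩
end

section
/- Let (𝓑₁, 𝓑₀) be a Rota-Baxter operator on a crossed module of groups (H, G, t, Φ). In the category associated with (H, G, t, Φ) (objects G, morphisms G × H, source 𝔰(a, p) = a, target 𝔱(a, p) = t(p)·a, and composition (a, p) ∘ (b, q) = (b, p·q) defined when t(q)·b = a), define R₁(m, n) = (Ad_{𝓑(m)}(n), Ad_{(𝓑(c)⁻¹)·_Φ c⁻¹}(m)) with c = Ad_{𝓑(m)}(n), where Ad is conjugation in the semidirect product group (G ⋉_Φ H, ·_Φ) with (a, p) ·_Φ (b, q) = (a·b, p·Φ(a)(q)) and 𝓑(a, p) = (𝓑₀(a), Φ(𝓑₀(a))(𝓑₁(Φ(𝓑₀(a)⁻¹·a⁻¹)(p)))). Suppose (e, x), (f, y), (e', x'), (f', y') ∈ G × H satisfy t(x')·e' = e and t(y')·f' = f (so that (e, x) ∘ (e', x') and (f, y) ∘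 (f', y') are defined). Write R₁((e, x), (f, y)) = (m₁, m₂) and R₁((e', x'), (f', y')) = (m₁', m₂'). Then the composites m₁ ∘ m₁' and m₂ ∘ m₂' are defined (i.e. 𝔱(m₁') = 𝔰(m₁) and 𝔱(m₂') = 𝔰(m₂)) and R₁((e, x) ∘ (e', x'), (f, y) ∘ (f', y')) = (m₁ ∘ m₁', m₂ ∘ m₂'). -/
/-- The Yang-Baxter map `R(m,n) = (Ad_{B(m)}(n), Ad_{B(c)⁻¹·c⁻¹}(m))`, `c = Ad_{B(m)}(n)`,
written for an abstract multiplication `mul` and inversion `inv`. -/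
def Rgen {X : Type*} (mul : X → X → X) (inv : X → X) (B : X → X) (z : X × X) : X × X :=
  let c := mul (mul (B z.1) z.2) (inv (B z.1))
  let d := mul (inv (B c)) (inv c)
  (c, mul (mul d z.1) (inv d))

/-- Composition of morphisms in the category associated with a crossed module:
`(a,p) ∘ (b,q) = (b, p·q)` (defined when `t(q)·b = a`). -/
def catComp {H G : Type*} [Group H] (m n : G × H) : G × H := (n.1, m.2 * n.2)

namespace IsCrossedModule

variable {H G : Type*} [Group H] [Group G] {t : H → G} {Φ : G → H → H}

theorem Φ_map_one (h : IsCrossedModule t Φ) (a : G) : Φ a 1 = 1 := by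
  have := h.Φ_mul_hom a 1 1
  simpa using this

theorem Φ_map_inv (h : IsCrossedModule t Φ) (a : G) (p : H) : Φ a p⁻¹ = (Φ a p)⁻¹ := by
  rw [eq_inv_iff_mul_eq_one, ← h.Φ_mul_hom, inv_mul_cancel, h.Φ_map_one]

theorem t_one (h : IsCrossedModule t Φ) : t 1 = 1 := by
  have := h.t_mul 1 1
  simpa using this

theorem Φ_t_inv (h : IsCrossedModule t Φ) (p q : H) : Φ (t p)⁻¹ q = p⁻¹ * q * p := by
  rw [← h.t_inv, h.peiffer, inv_inv]

end IsCrossedModule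

/-- `k` is the composite `m ∘ n` in the category associated with a crossed module. -/
def IsCatComp {H G : Type*} [Group H] [Group G] (t : H → G) (m n k : G × H) : Prop :=
  t n.2 * n.1 = m.1 ∧ k = catComp m n

namespace IsCatComp

variable {H G : Type*} [Group H] [Group G] {t : H → G} {Φ : G → H → H}
  {B₁ : H → H} {B₀ : G → G}

/-- The semidirect product multiplication preserves composition (the interchange law). -/
theorem sdpMul (hcm : IsCrossedModule t Φ) {m m' k n n' l : G × H}
    (hm : IsCatComp t m m' k) (hn : IsCatComp t n n' l) :
    IsCatComp t (sdpMul Φ m n) (sdpMul Φ m' n') (sdpMul Φ k l) := by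
  obtain ⟨a, p⟩ := m
  obtain ⟨a', p'⟩ := m'
  obtain ⟨b, q⟩ := n
  obtain ⟨b', q'⟩ := n'
  obtain ⟨hm, rfl⟩ := hm
  obtain ⟨hn, rfl⟩ := hn
  dsimp only at hm hn
  subst hm hn
  refine ⟨?_, Prod.ext rfl ?_⟩
  · simp only [_root_.sdpMul, hcm.t_mul, hcm.equivar]
    group
  · simp only [_root_.sdpMul, catComp, hcm.Φ_mul_hom, hcm.Φ_mul, hcm.peiffer]
    group

/-- The semidirect product inversion preserves composition. -/
theorem sdpInv (hcm : IsCrossedModule t Φ) {m m' k : G × H} (hm : IsCatComp t m m' k) :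
    IsCatComp t (sdpInv Φ m) (sdpInv Φ m') (sdpInv Φ k) := by
  obtain ⟨a, p⟩ := m
  obtain ⟨a', p'⟩ := m'
  obtain ⟨hm, rfl⟩ := hm
  dsimp only at hm
  subst hm
  refine ⟨?_, Prod.ext rfl ?_⟩
  · simp only [_root_.sdpInv, hcm.t_inv, hcm.equivar]
    group
  · simp only [_root_.sdpInv, catComp, mul_inv_rev, hcm.Φ_mul_hom, hcm.Φ_mul, hcm.Φ_t_inv,
      hcm.Φ_map_inv]
    group

/-- The operator `𝓑` preserves composition. -/
theorem Bcal (hcm : IsCrossedModule t Φ) (hrb : IsCMRotaBaxter t Φ B₁ B₀) {m m' k : G × H}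
    (hm : IsCatComp t m m' k) :
    IsCatComp t (Bcal Φ B₁ B₀ m) (Bcal Φ B₁ B₀ m') (Bcal Φ B₁ B₀ k) := by
  obtain ⟨a', q⟩ := m
  obtain ⟨a, p⟩ := m'
  obtain ⟨hm, rfl⟩ := hm
  dsimp only at hm
  subst hm
  set u := Φ ((B₀ a)⁻¹ * a⁻¹) p with hu
  have key : B₀ (t p * a) = B₀ a * t (B₁ u) := by
    rw [hrb.t_comm, hrb.rb₀, hu, hcm.equivar]
    congr 1
    group
  refine ⟨?_, Prod.ext rfl ?_⟩
  · simp only [_root_.Bcal, hcm.equivar, key, ← hu]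
    group
  · simp only [_root_.Bcal, catComp, key, ← hu]
    rw [hcm.Φ_mul (B₀ a), ← hcm.Φ_mul_hom, hcm.peiffer, inv_mul_cancel_right, hrb.rb₁]
    congr 2
    have hw : (B₀ a * t (B₁ u))⁻¹ * (t p * a)⁻¹
        = (t (B₁ u))⁻¹ * (((B₀ a)⁻¹ * a⁻¹) * (t p)⁻¹) := by group
    rw [hw, hcm.Φ_mul (t (B₁ u))⁻¹, hcm.Φ_mul _ (t p)⁻¹, hcm.Φ_t_inv, hcm.Φ_t_inv]
    simp only [hcm.Φ_mul_hom, hcm.Φ_map_inv, ← hu]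
    group

/-- The Yang-Baxter map preserves composition in both arguments. -/
theorem Rgen (hcm : IsCrossedModule t Φ) (hrb : IsCMRotaBaxter t Φ B₁ B₀)
    {m m' k n n' l : G × H} (hm : IsCatComp t m m' k) (hn : IsCatComp t n n' l) :
    let R := Rgen (_root_.sdpMul Φ) (_root_.sdpInv Φ) (_root_.Bcal Φ B₁ B₀)
    IsCatComp t (R (m, n)).1 (R (m', n')).1 (R (k, l)).1 ∧
      IsCatComp t (R (m, n)).2 (R (m', n')).2 (R (k, l)).2 := by
  have hB := hm.Bcal hcm hrb
  have hc := (hB.sdpMul hcm hn).sdpMul hcm (hB.sdpInv hcm)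
  have hd := ((hc.Bcal hcm hrb).sdpInv hcm).sdpMul hcm (hc.sdpInv hcm)
  exact ⟨hc, (hd.sdpMul hcm hm).sdpMul hcm (hd.sdpInv hcm)⟩

end IsCatComp

theorem stmt11 {H G : Type*} [Group H] [Group G] (t : H → G) (Φ : G → H → H)
    (B₁ : H → H) (B₀ : G → G) (hcm : IsCrossedModule t Φ)
    (hrb : IsCMRotaBaxter t Φ B₁ B₀)
    (e f e' f' : G) (x y x' y' : H)
    (h₁ : t x' * e' = e) (h₂ : t y' * f' = f) :
    -- the composite of the first components is defined: 𝔱(m₁') = 𝔰(m₁)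
    (t (Rgen (sdpMul Φ) (sdpInv Φ) (Bcal Φ B₁ B₀) ((e', x'), (f', y'))).1.2
        * (Rgen (sdpMul Φ) (sdpInv Φ) (Bcal Φ B₁ B₀) ((e', x'), (f', y'))).1.1
      = (Rgen (sdpMul Φ) (sdpInv Φ) (Bcal Φ B₁ B₀) ((e, x), (f, y))).1.1) ∧
    -- the composite of the second components is defined: 𝔱(m₂') = 𝔰(m₂)
    (t (Rgen (sdpMul Φ) (sdpInv Φ) (Bcal Φ B₁ B₀) ((e', x'), (f', y'))).2.2
        * (Rgen (sdpMul Φ) (sdpInv Φ) (Bcal Φ B₁ B₀) ((e', x'), (f', y'))).2.1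
      = (Rgen (sdpMul Φ) (sdpInv Φ) (Bcal Φ B₁ B₀) ((e, x), (f, y))).2.1) ∧
    -- R₁ is compatible with composition
    Rgen (sdpMul Φ) (sdpInv Φ) (Bcal Φ B₁ B₀)
        (catComp (e, x) (e', x'), catComp (f, y) (f', y'))
      = (catComp (Rgen (sdpMul Φ) (sdpInv Φ) (Bcal Φ B₁ B₀) ((e, x), (f, y))).1
            (Rgen (sdpMul Φ) (sdpInv Φ) (Bcal Φ B₁ B₀) ((e', x'), (f', y'))).1,
         catComp (Rgen (sdpMul Φ) (sdpInv Φ) (Bcal Φ B₁ B₀) ((e, x), (f, y))).2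
            (Rgen (sdpMul Φ) (sdpInv Φ) (Bcal Φ B₁ B₀) ((e', x'), (f', y'))).2) := by
  obtain ⟨hc, hd⟩ := IsCatComp.Rgen hcm hrb (m := (e, x)) (m' := (e', x')) (n := (f, y))
    (n' := (f', y')) ⟨h₁, rfl⟩ ⟨h₂, rfl⟩
  exact ⟨hc.1, hd.1, Prod.ext hc.2 hd.2⟩
end

section
/- Let (B₁, B₀) be a Rota-Baxter operator on a crossed module of Lie algebras (h, g, dt, φ) over ℝ. Define [u, v]_{B₁} = [B₁(u), v] + [u, B₁(v)] + [u, v] on h, [x, y]_{B₀} = [B₀(x), y] + [x, B₀(y)] + [x, y] on g, and φ̂(x)(u) = φ(x)(B₁(u)) + φ(B₀(x))(u) + φ(x)(u). Then for all x, y ∈ g and u, v ∈ h: (1) φ̂([x, y]_{B₀})(u) = φ̂(x)(φ̂(y)(u)) − φ̂(y)(φ̂(x)(u)); (2) φ̂(x)([u, v]_{B₁}) = [φ̂(x)(u), v]_{B₁} + [u, φ̂(x)(v)]_{B₁}. -/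
/-- A crossed module of Lie algebras over ℝ: `dt : h → g` a Lie algebra homomorphism and
`φ : g → Der(h)` a Lie algebra homomorphism into derivations, with equivariance and the
Peiffer identity. -/
structure IsLieCrossedModule {h g : Type*}
    [LieRing h] [LieAlgebra ℝ h] [LieRing g] [LieAlgebra ℝ g]
    (dt : h →ₗ[ℝ] g) (φ : g →ₗ[ℝ] Module.End ℝ h) : Prop where
  dt_bracket : ∀ u v : h, dt ⁅u, v⁆ = ⁅dt u, dt v⁆
  φ_deriv : ∀ (x : g) (u v : h), φ x ⁅u, v⁆ = ⁅φ x u, v⁆ + ⁅u, φ x v⁆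
  φ_hom : ∀ (x y : g) (u : h), φ ⁅x, y⁆ u = φ x (φ y u) - φ y (φ x u)
  equivar : ∀ (x : g) (u : h), dt (φ x u) = ⁅x, dt u⁆
  peiffer : ∀ u v : h, φ (dt u) v = ⁅u, v⁆

/-- Rota-Baxter operator of weight 1 on a Lie algebra. -/
def IsRotaBaxterLie {g : Type*} [LieRing g] [LieAlgebra ℝ g] (B : g →ₗ[ℝ] g) : Prop :=
  ∀ x y : g, ⁅B x, B y⁆ = B (⁅B x, y⁆ + ⁅x, B y⁆ + ⁅x, y⁆)

/-- Rota-Baxter operator on a crossed module of Lie algebras. -/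
structure IsLieCMRotaBaxter {h g : Type*}
    [LieRing h] [LieAlgebra ℝ h] [LieRing g] [LieAlgebra ℝ g]
    (dt : h →ₗ[ℝ] g) (φ : g →ₗ[ℝ] Module.End ℝ h)
    (B₁ : h →ₗ[ℝ] h) (B₀ : g →ₗ[ℝ] g) : Prop where
  rb₁ : IsRotaBaxterLie B₁
  rb₀ : IsRotaBaxterLie B₀
  comm : ∀ u : h, dt (B₁ u) = B₀ (dt u)
  compat : ∀ (x : g) (u : h),
    φ (B₀ x) (B₁ u) = B₁ (φ x (B₁ u) + φ (B₀ x) u + φ x u)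

/-- The descended bracket `[u,v]_B = [B u, v] + [u, B v] + [u, v]`. -/
def brB {l : Type*} [LieRing l] [LieAlgebra ℝ l] (B : l →ₗ[ℝ] l) (u v : l) : l :=
  ⁅B u, v⁆ + ⁅u, B v⁆ + ⁅u, v⁆

/-- The descended action `φ̂(x)(u) = φ(x)(B₁ u) + φ(B₀ x)(u) + φ(x)(u)`. -/
def hatphiL {h g : Type*} [LieRing h] [LieAlgebra ℝ h] [LieRing g] [LieAlgebra ℝ g]
    (φ : g →ₗ[ℝ] Module.End ℝ h) (B₁ : h →ₗ[ℝ] h) (B₀ : g →ₗ[ℝ] g)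
    (x : g) (u : h) : h :=
  φ x (B₁ u) + φ (B₀ x) u + φ x u

theorem IsLieCMRotaBaxter.map_hatphiL {h g : Type*}
    [LieRing h] [LieAlgebra ℝ h] [LieRing g] [LieAlgebra ℝ g]
    {dt : h →ₗ[ℝ] g} {φ : g →ₗ[ℝ] Module.End ℝ h} {B₁ : h →ₗ[ℝ] h} {B₀ : g →ₗ[ℝ] g}
    (hrb : IsLieCMRotaBaxter dt φ B₁ B₀) (x : g) (u : h) :
    B₁ (hatphiL φ B₁ B₀ x u) = φ (B₀ x) (B₁ u) :=
  (hrb.compat x u).symm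

theorem IsRotaBaxterLie.map_brB {l : Type*} [LieRing l] [LieAlgebra ℝ l] {B : l →ₗ[ℝ] l}
    (hB : IsRotaBaxterLie B) (x y : l) : B (brB B x y) = ⁅B x, B y⁆ :=
  (hB x y).symm

theorem stmt15 {h g : Type*}
    [LieRing h] [LieAlgebra ℝ h] [LieRing g] [LieAlgebra ℝ g]
    (dt : h →ₗ[ℝ] g) (φ : g →ₗ[ℝ] Module.End ℝ h)
    (hcm : IsLieCrossedModule dt φ) (B₁ : h →ₗ[ℝ] h) (B₀ : g →ₗ[ℝ] g)
    (hrb : IsLieCMRotaBaxter dt φ B₁ B₀) :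
    -- (1) φ̂ is a Lie algebra homomorphism from (g, [·,·]_{B₀})
    (∀ (x y : g) (u : h),
      hatphiL φ B₁ B₀ (brB B₀ x y) u
        = hatphiL φ B₁ B₀ x (hatphiL φ B₁ B₀ y u)
          - hatphiL φ B₁ B₀ y (hatphiL φ B₁ B₀ x u)) ∧
    -- (2) each φ̂(x) is a derivation of [·,·]_{B₁}
    (∀ (x : g) (u v : h),
      hatphiL φ B₁ B₀ x (brB B₁ u v)
        = brB B₁ (hatphiL φ B₁ B₀ x u) v + brB B₁ u (hatphiL φ B₁ B₀ x v)) := by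
  constructor
  · intro x y u
    rw [hatphiL, hatphiL, hrb.map_hatphiL, hatphiL.eq_def φ B₁ B₀ y (hatphiL φ B₁ B₀ x u),
      hrb.map_hatphiL, hrb.rb₀.map_brB]
    simp only [hatphiL, brB, map_add, LinearMap.add_apply, hcm.φ_hom]
    abel
  · intro x u v
    rw [hatphiL, brB.eq_def B₁ (hatphiL φ B₁ B₀ x u), brB.eq_def B₁ u (hatphiL φ B₁ B₀ x v),
      hrb.map_hatphiL, hrb.map_hatphiL, hrb.rb₁.map_brB]
    simp only [hatphiL, brB, map_add, hcm.φ_deriv, lie_add, add_lie]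
    abel
end

section
/- Let (B₁, B₀) be a Rota-Baxter operator on a crossed module of Lie algebras (h, g, dt, φ) over ℝ. Define [u, v]_{B₁} = [B₁(u), v] + [u, B₁(v)] + [u, v] on h, [x, y]_{B₀} = [B₀(x), y] + [x, B₀(y)] + [x, y] on g, and φ̂(x)(u) = φ(x)(B₁(u)) + φ(B₀(x))(u) + φ(x)(u). Then for all x ∈ g and u, v ∈ h: (1) dt([u, v]_{B₁}) = [dt(u), dt(v)]_{B₀}; (2) φ̂(dt(u))(v) = [u, v]_{B₁}; (3) dt(φ̂(x)(u)) = [x, dt(u)]_{B₀}. -/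
theorem stmt16 {h g : Type*}
    [LieRing h] [LieAlgebra ℝ h] [LieRing g] [LieAlgebra ℝ g]
    (dt : h →ₗ[ℝ] g) (φ : g →ₗ[ℝ] Module.End ℝ h)
    (hcm : IsLieCrossedModule dt φ) (B₁ : h →ₗ[ℝ] h) (B₀ : g →ₗ[ℝ] g)
    (hrb : IsLieCMRotaBaxter dt φ B₁ B₀) :
    -- (1) dt is a homomorphism for the descended brackets
    (∀ u v : h, dt (brB B₁ u v) = brB B₀ (dt u) (dt v)) ∧
    -- (2) Peiffer identity for the descended structures
    (∀ u v : h, hatphiL φ B₁ B₀ (dt u) v = brB B₁ u v) ∧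
    -- (3) equivariance for the descended structures
    (∀ (x : g) (u : h), dt (hatphiL φ B₁ B₀ x u) = brB B₀ x (dt u)) := by
  refine ⟨fun u v => ?_, fun u v => ?_, fun x u => ?_⟩
  · simp only [brB, map_add, hcm.dt_bracket, hrb.comm]
  · simp only [brB, hatphiL, ← hrb.comm, hcm.peiffer]
    abel
  · simp only [brB, hatphiL, map_add, hcm.equivar, hrb.comm]
    abel
end

section
/- Let (B₁, B₀) be a Rota-Baxter operator on a crossed module of Lie algebras (h, g, dt, φ) over ℝ. On g ⊕ h define the semidirect product bracket [(x, u), (y, v)]_φ = ([x, y], φ(x)(v) − φ(y)(u) + [u, v]) and set B(x, u) = (B₀(x), B₁(u)). Then B is a Rota-Baxter operator of weight 1 on the semidirect product Lie algebra (g ⋉ h, [·,·]_φ); that is, [B(x, u), B(y, v)]_φ = B([B(x, u), (y, v)]_φ + [(x, u), B(y, v)]_φ + [(x, u), (y, v)]_φ) for all x, y ∈ g, u, v ∈ h. -/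
/-- The semidirect product bracket `[(x,u),(y,v)]_φ = ([x,y], φ(x)v − φ(y)u + [u,v])`
on `g ⊕ h`. -/
def brSdp {h g : Type*} [LieRing h] [LieAlgebra ℝ h] [LieRing g] [LieAlgebra ℝ g]
    (φ : g →ₗ[ℝ] Module.End ℝ h) (m n : g × h) : g × h :=
  (⁅m.1, n.1⁆, φ m.1 n.2 - φ n.1 m.2 + ⁅m.2, n.2⁆)

/-- The operator `B(x,u) = (B₀ x, B₁ u)` on `g ⊕ h`. -/
def Bsdp {h g : Type*} [LieRing h] [LieAlgebra ℝ h] [LieRing g] [LieAlgebra ℝ g]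
    (B₁ : h →ₗ[ℝ] h) (B₀ : g →ₗ[ℝ] g) (m : g × h) : g × h :=
  (B₀ m.1, B₁ m.2)

theorem stmt17 {h g : Type*}
    [LieRing h] [LieAlgebra ℝ h] [LieRing g] [LieAlgebra ℝ g]
    (dt : h →ₗ[ℝ] g) (φ : g →ₗ[ℝ] Module.End ℝ h)
    (hcm : IsLieCrossedModule dt φ) (B₁ : h →ₗ[ℝ] h) (B₀ : g →ₗ[ℝ] g)
    (hrb : IsLieCMRotaBaxter dt φ B₁ B₀) :
    ∀ m n : g × h,
      brSdp φ (Bsdp B₁ B₀ m) (Bsdp B₁ B₀ n)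
        = Bsdp B₁ B₀
            (brSdp φ (Bsdp B₁ B₀ m) n + brSdp φ m (Bsdp B₁ B₀ n) + brSdp φ m n) := by
  rintro ⟨x, u⟩ ⟨y, v⟩
  refine Prod.ext (hrb.rb₀ x y) ?_
  simp only [brSdp, Bsdp, Prod.snd_add]
  rw [hrb.compat x v, hrb.compat y u, hrb.rb₁ u v, ← map_sub, ← map_add]
  congr 1
  abel
end
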